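/- In the pure braid group P_4, the three elements c_{31} = A_{3,4}^{−1}A_{2,4}^{−1}A_{1,4}^{−1}, c_{22} = A_{2,4}^{−1}A_{1,4}^{−1}A_{2,3}^{−1}A_{1,3}^{−1}, c_{13} = A_{1,4}^{−1}A_{1,3}^{−1}A_{1,2}^{−1} freely generate a free subgroup of rank 3; i.e. the subgroup T_3^c = ⟨c_{31}, c_{22}, c_{13}⟩ ≤ P_4 is free of rank 3. -/

import Mathlib

namespace Paper

/-- Generators `A_{i,j}`, `1 ≤ i < j ≤ 4`, of the pure braid group `P_4`. -/
abbrev PGen := {p : ℕ × ℕ // 1 ≤ p.1 ∧ p.1 < p.2 ∧ p.2 ≤ 4}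

/-- The generator `A_{i,j}` as an element of the free group (junk value `1` out of range). -/
def fA (i j : ℕ) : FreeGroup PGen :=
  if h : 1 ≤ i ∧ i < j ∧ j ≤ 4 then FreeGroup.of ⟨(i, j), h⟩ else 1

/-- Conjugation `a^b = b⁻¹ * a * b`. -/
def cj {G : Type*} [Group G] (a b : G) : G := b⁻¹ * a * b

/-- Commutator `[a, b] = a⁻¹ * b⁻¹ * a * b`. -/
def cm {G : Type*} [Group G] (a b : G) : G := a⁻¹ * b⁻¹ * a * b

/-- The defining relations of the pure braid group `P_4` (`ε = ±1`):
`A_{i,k}^{-ε}A_{k,j}A_{i,k}^{ε} = (A_{i,j}A_{k,j})^{ε}A_{k,j}(A_{i,j}A_{k,j})^{-ε}` for `i<k<j`;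
`A_{k,m}^{-ε}A_{k,j}A_{k,m}^{ε} = (A_{k,j}A_{m,j})^{ε}A_{k,j}(A_{k,j}A_{m,j})^{-ε}` for `k<m<j`;
`A_{i,m}^{-ε}A_{k,j}A_{i,m}^{ε} = [A_{i,j}^{-ε},A_{m,j}^{-ε}]^{ε}A_{k,j}[A_{i,j}^{-ε},A_{m,j}^{-ε}]^{-ε}`
for `i<k<m<j`; and `A_{i,m}^{-ε}A_{k,j}A_{i,m}^{ε} = A_{k,j}` for `k<i, m<j`, or `m<k`. -/
def P4Rels : Set (FreeGroup PGen) :=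
  {r | ∃ e : ℤ, (e = 1 ∨ e = -1) ∧
    ((∃ i k j : ℕ, 1 ≤ i ∧ i < k ∧ k < j ∧ j ≤ 4 ∧
        r = (fA i k) ^ (-e) * fA k j * (fA i k) ^ e *
            ((fA i j * fA k j) ^ e * fA k j * (fA i j * fA k j) ^ (-e))⁻¹) ∨
     (∃ k m j : ℕ, 1 ≤ k ∧ k < m ∧ m < j ∧ j ≤ 4 ∧
        r = (fA k m) ^ (-e) * fA k j * (fA k m) ^ e *
            ((fA k j * fA m j) ^ e * fA k j * (fA k j * fA m j) ^ (-e))⁻¹) ∨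
     (∃ i k m j : ℕ, 1 ≤ i ∧ i < k ∧ k < m ∧ m < j ∧ j ≤ 4 ∧
        r = (fA i m) ^ (-e) * fA k j * (fA i m) ^ e *
            ((cm ((fA i j) ^ (-e)) ((fA m j) ^ (-e))) ^ e * fA k j *
             (cm ((fA i j) ^ (-e)) ((fA m j) ^ (-e))) ^ (-e))⁻¹) ∨
     (∃ i m k j : ℕ, 1 ≤ i ∧ i < m ∧ m ≤ 4 ∧ 1 ≤ k ∧ k < j ∧ j ≤ 4 ∧
        ((k < i ∧ m < j) ∨ m < k) ∧
        r = (fA i m) ^ (-e) * fA k j * (fA i m) ^ e * (fA k j)⁻¹))}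

/-- The pure braid group `P_4`, given by its presentation. -/
abbrev P4 := PresentedGroup P4Rels

/-- The generator `A_{i,j}` as an element of `P_4` (junk value `1` out of range). -/
def pA (i j : ℕ) : P4 :=
  if h : 1 ≤ i ∧ i < j ∧ j ≤ 4 then PresentedGroup.of ⟨(i, j), h⟩ else 1

/-- `c_{11} = A_{12}⁻¹`. -/
def c11 : P4 := (pA 1 2)⁻¹
/-- `c_{21} = A_{23}⁻¹A_{13}⁻¹`. -/
def c21 : P4 := (pA 2 3)⁻¹ * (pA 1 3)⁻¹
/-- `c_{12} = A_{13}⁻¹A_{12}⁻¹`. -/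
def c12 : P4 := (pA 1 3)⁻¹ * (pA 1 2)⁻¹
/-- `c_{31} = A_{34}⁻¹A_{24}⁻¹A_{14}⁻¹`. -/
def c31 : P4 := (pA 3 4)⁻¹ * (pA 2 4)⁻¹ * (pA 1 4)⁻¹
/-- `c_{22} = A_{24}⁻¹A_{14}⁻¹A_{23}⁻¹A_{13}⁻¹`. -/
def c22 : P4 := (pA 2 4)⁻¹ * (pA 1 4)⁻¹ * (pA 2 3)⁻¹ * (pA 1 3)⁻¹
/-- `c_{13} = A_{14}⁻¹A_{13}⁻¹A_{12}⁻¹`. -/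
def c13 : P4 := (pA 1 4)⁻¹ * (pA 1 3)⁻¹ * (pA 1 2)⁻¹

/-!
The three elements are shown to be free generators in a quotient of `P_4`. Modulo its centre, `P_4`
is a semidirect product `Q = F(d, a, b) ⋊ F(A₁₂, A₂₃)`, where `d = A₁₄A₂₄A₃₄`, `a = (A₁₄A₂₄)⁻¹`
and `b = A₁₄`, and where `d` is fixed by the action. Only a homomorphism `toQ : P4 →* Q` is needed.
Write `α, β` for the generators of the acting group. The images of `c₃₁, c₂₂, c₁₃` are `(d⁻¹, 1)`,
`(a d, α)` and `(b⁻¹ d, β)`; let `Phi : F(x₀, x₁, x₂) → Q` be the resulting homomorphism.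

The second component of `Phi` kills `x₀` and sends `x₁, x₂` to `α, β`. Hence `ker Phi` lies in the
normal closure of `x₀`, which is free on the conjugates `w x₀ w⁻¹` with `w ∈ F(x₁, x₂)`. For such
`w`, write `Phi w = (u_w, w)`. Since `d` is fixed by the action, `Phi (w x₀ w⁻¹) = u_w d⁻¹ u_w⁻¹`.
The normal closure of `d` in `F(d, a, b)` is free on the elements `X_g = g d g⁻¹`, `g ∈ F(a, b)`,
and there `u_w d⁻¹ u_w⁻¹ = n_w X_{vee w}⁻¹ n_w⁻¹`, where `vee w` is the image of `u_w` under
`d ↦ 1` and `n_w` lies in that normal closure.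

The map `vee` is injective (`vee_injective`). Indeed, modulo `d` the action is by conjugation, with
`α, β` acting as `a, b`; identifying these, `(u, g) ↦ u g` is a homomorphism from `Q` to a free
group of rank two. Composed with `Phi` it sends `x₁` to `a²` and `x₂` to `1`, so
`vee w * w = a ^ (2 e)`, where `e` is the exponent sum of `x₁` in `w`. Taking exponent sums shows
that `vee w` determines `e`, and therefore `w`.

Conjugates of distinct basis elements of a free group, one for each, are free generators
(`conj_injective`). Any values in a nilpotent group can be prescribed for these conjugates, by
correcting the values of the basis elements along the lower central series (`solve_nilpotent`); and
free groups are residually nilpotent (`exists_nilpotent`), by unitriangular matrices over `ZMod 2`.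
It follows that `Phi` is injective.
-/

/-! ### Residual nilpotence of free groups -/

section Unitriangular

open Matrix

/-- Upper unitriangular matrices over the field with two elements. -/
def IsUni {n : ℕ} (A : Matrix (Fin n) (Fin n) (ZMod 2)) : Prop :=
  A.IsUpperTriangular ∧ ∀ i, A i i = 1

/-- `A - 1` is nilpotent of order at most `n ≤ 2 ^ n`, and `x ↦ x ^ 2` is additive on
polynomials in `A`. -/
lemma IsUni.pow_eq_one {n : ℕ} {A : Matrix (Fin n) (Fin n) (ZMod 2)} (hA : IsUni A) :
    A ^ 2 ^ n = 1 := by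
  rcases Nat.eq_zero_or_pos n with rfl | hn
  · exact Subsingleton.elim _ _
  have : Nonempty (Fin n) := ⟨⟨0, hn⟩⟩
  have hN : (A - 1) ^ n = 0 := by
    have h := Matrix.aeval_self_charpoly (A - 1)
    rw [Matrix.charpoly_of_isUpperTriangular (A - 1)
      (Matrix.BlockTriangular.sub hA.1 Matrix.blockTriangular_one)] at h
    simpa [hA.2] using h
  have h := add_pow_char_pow_of_commute (p := 2) (n := n) (Commute.one_right (A - 1))
  rw [sub_add_cancel, one_pow] at h
  rw [h, pow_eq_zero_of_le Nat.lt_two_pow_self.le hN, zero_add]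

lemma IsUni.mul {n : ℕ} {A B : Matrix (Fin n) (Fin n) (ZMod 2)} (hA : IsUni A) (hB : IsUni B) :
    IsUni (A * B) := by
  refine ⟨Matrix.BlockTriangular.mul hA.1 hB.1, fun i => ?_⟩
  rw [Matrix.mul_apply, Finset.sum_eq_single i, hA.2, hB.2, one_mul]
  · intro j _ hj
    rcases lt_or_gt_of_ne hj with h | h
    · rw [hA.1 h, zero_mul]
    · rw [hB.1 h, mul_zero]
  · simp

lemma isUni_one {n : ℕ} : IsUni (1 : Matrix (Fin n) (Fin n) (ZMod 2)) :=
  ⟨Matrix.blockTriangular_one, fun i => Matrix.one_apply_eq i⟩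

/-- The group of upper unitriangular matrices over the field with two elements, a finite
`2`-group. -/
def uniGroup (n : ℕ) : Subgroup (Matrix (Fin n) (Fin n) (ZMod 2))ˣ where
  carrier := {u | IsUni u.1}
  mul_mem' := fun ha hb => ha.mul hb
  one_mem' := isUni_one
  inv_mem' := by
    intro u hu
    have h1 : u ^ (2 ^ n) = 1 := Units.ext (by simpa using hu.pow_eq_one)
    have h2 : u⁻¹ = u ^ (2 ^ n - 1) := by
      rw [inv_eq_iff_mul_eq_one, ← pow_succ', Nat.sub_add_cancel Nat.one_le_two_pow, h1]
    rw [h2]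
    have h3 : ∀ k : ℕ, IsUni (u ^ k).1 := by
      intro k
      induction k with
      | zero => simpa using isUni_one
      | succ k ih => rw [pow_succ]; exact ih.mul hu
    exact h3 _

instance uniGroup_nilpotent (n : ℕ) : Group.IsNilpotent (uniGroup n) := by
  have : Fact (Nat.Prime 2) := ⟨Nat.prime_two⟩
  refine IsPGroup.isNilpotent (p := 2) fun u => ⟨n, ?_⟩
  refine Subtype.ext (Units.ext ?_)
  simpa using IsUni.pow_eq_one u.2

/-- The identity plus the elementary matrices in the positions `(l, l + 1)` for which the `l`-th
letter of `L` is `x`. -/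
def edge {Y : Type*} [DecidableEq Y] (L : List (Y × Bool)) (x : Y × Bool) :
    Matrix (Fin (L.length + 1)) (Fin (L.length + 1)) (ZMod 2) :=
  1 + Matrix.of fun l k : Fin (L.length + 1) =>
    if (l : ℕ) + 1 = (k : ℕ) ∧ L[(l : ℕ)]? = some x then (1 : ZMod 2) else 0

lemma isUni_edge {Y : Type*} [DecidableEq Y] (L : List (Y × Bool)) (x : Y × Bool) : IsUni (edge L x) := by
  refine ⟨Matrix.BlockTriangular.add Matrix.blockTriangular_one fun i j h => ?_, fun i => ?_⟩
  · have : ¬ (i : ℕ) + 1 = j := by have : j < i := h; omega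
    simp [this]
  · simp [edge]

lemma vecMul_edge {Y : Type*} [DecidableEq Y] (L : List (Y × Bool)) (x : Y × Bool)
    (r : Fin (L.length + 1) → ZMod 2) (l : Fin L.length) :
    (r ᵥ* edge L x) l.succ = r l.succ + if L[l] = x then r l.castSucc else 0 := by
  rw [edge, Matrix.vecMul_add, Matrix.vecMul_one, Pi.add_apply]
  congr 1
  rw [Matrix.vecMul, dotProduct, Finset.sum_eq_single l.castSucc]
  · simp
  · intro b _ hb
    have : (b : ℕ) ≠ l := fun h => hb (Fin.ext h)
    simp [this]
  · simp

/-- `edge` as an element of the unitriangular group. -/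
def edgeU {Y : Type*} [DecidableEq Y] (L : List (Y × Bool)) (x : Y × Bool) : uniGroup (L.length + 1) :=
  ⟨Units.ofPowEqOne _ _ (isUni_edge L x).pow_eq_one (by positivity), isUni_edge L x⟩

/-- If the row `r` ends with an entry `1` in column `j`, then multiplying it on the right by the
matrix `edge L (i, s) * (edge L (i, !s))⁻¹` attached to the `j`-th letter `(i, s)` of the reduced
word `L` gives a row ending with an entry `1` in column `j + 1`. -/
lemma row_step {Y : Type*} [DecidableEq Y] {L : List (Y × Bool)}
    (hL : FreeGroup.IsReduced L) (j : Fin L.length)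
    {i : Y} {s : Bool} (hj : L[j] = (i, s)) {r r' : Fin (L.length + 1) → ZMod 2}
    (h0 : r j.castSucc = 1) (h1 : ∀ k, j.castSucc < k → r k = 0)
    (h : r' ᵥ* edge L (i, !s) = r ᵥ* edge L (i, s)) :
    r' j.succ = 1 ∧ ∀ k, j.succ < k → r' k = 0 := by
  have key : ∀ l : Fin L.length, r' l.succ + (if L[l] = (i, !s) then r' l.castSucc else 0) =
      r l.succ + if L[l] = (i, s) then r l.castSucc else 0 := fun l => by
    rw [← vecMul_edge, ← vecMul_edge, h]
  constructor
  · have := key j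
    simpa [hj, h0, h1 j.succ Fin.castSucc_lt_succ] using this
  · suffices H : ∀ (m : ℕ) (hm : m + 1 < L.length + 1), (j : ℕ) < m → r' ⟨m + 1, hm⟩ = 0 by
      intro k hk
      obtain ⟨m, rfl⟩ := Fin.exists_succ_eq.2 (Fin.ne_zero_of_lt hk)
      exact H m m.succ.2 (by simpa using hk)
    intro m
    induction m with
    | zero => intro _ h; omega
    | succ m ih =>
      intro hm hjm
      have hk := key ⟨m + 1, by omega⟩
      have e1 : r (Fin.succ ⟨m + 1, by omega⟩) = 0 := h1 _ (by simp [Fin.lt_def]; omega)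
      have e2 : r (Fin.castSucc ⟨m + 1, by omega⟩) = 0 := h1 _ (by simpa [Fin.lt_def] using hjm)
      rw [e1, e2, ite_self, add_zero] at hk
      rcases Nat.lt_succ_iff_lt_or_eq.1 hjm with hlt | heq
      · have e3 : r' (Fin.castSucc ⟨m + 1, by omega⟩) = 0 := ih (by omega) hlt
        rw [e3, ite_self, add_zero] at hk
        exact hk
      ·
        -- the letter after `(i, s)` is not its inverse `(i, !s)`
        have e4 : L[(⟨m + 1, by omega⟩ : Fin L.length)] ≠ (i, !s) := by
          intro h5
          have := List.isChain_iff_getElem.1 hL m (by omega)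
          subst heq
          simp only [Fin.getElem_fin] at hj h5
          rw [hj, h5] at this
          simp at this
        rw [if_neg e4, add_zero] at hk
        exact hk

/-- Free groups are residually nilpotent. The generator `i` is sent to
`edge (i, true) * (edge (i, false))⁻¹`, so that the image of a reduced word `L` has the entry `1`
in the top right corner. -/
lemma exists_nilpotent {Y : Type*} [DecidableEq Y] {W : FreeGroup Y} (hW : W ≠ 1) :
    ∃ (n : ℕ) (f : Y → uniGroup n), FreeGroup.lift f W ≠ 1 := by
  set L := W.toWord with hLdef
  have hL : FreeGroup.IsReduced L := FreeGroup.isReduced_toWord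
  let f : Y → uniGroup (L.length + 1) := fun i => edgeU L (i, true) * (edgeU L (i, false))⁻¹
  refine ⟨_, f, fun h => ?_⟩
  let P : ℕ → uniGroup (L.length + 1) := fun j =>
    ((L.take j).map fun x => cond x.2 (f x.1) (f x.1)⁻¹).prod
  let r : ℕ → Fin (L.length + 1) → ZMod 2 := fun j => (P j).1.1 0
  -- the top row of the product of the first `j` letters has its last nonzero entry in column `j`
  have H : ∀ (j : ℕ) (hj : j < L.length + 1), r j ⟨j, hj⟩ = 1 ∧ ∀ k, ⟨j, hj⟩ < k → r j k = 0 := by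
    intro j
    induction j with
    | zero =>
      intro _
      have : r 0 = (1 : Matrix (Fin (L.length + 1)) (Fin (L.length + 1)) (ZMod 2)) 0 := by
        simp [r, P]
      rw [this]
      exact ⟨Matrix.one_apply_eq _, fun k hk => Matrix.one_apply_ne hk.ne⟩
    | succ j ih =>
      intro hj
      obtain ⟨ih0, ih1⟩ := ih (by omega)
      have hx : L[(⟨j, by omega⟩ : Fin L.length)] = ((L[j]'(by omega)).1, (L[j]'(by omega)).2) := rfl
      refine row_step hL ⟨j, by omega⟩ hx (r := r j) ih0 ih1 ?_
      have hP : P (j + 1) * edgeU L ((L[j]'(by omega)).1, !(L[j]'(by omega)).2) =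
          P j * edgeU L ((L[j]'(by omega)).1, (L[j]'(by omega)).2) := by
        simp only [P, List.take_succ_eq_append_getElem (show j < L.length by omega),
          List.map_append, List.prod_append, List.map_cons, List.map_nil, List.prod_singleton, f]
        rcases (L[j]'(by omega)).2 <;> simp [mul_assoc]
      have := congrArg (fun u : uniGroup (L.length + 1) => u.1.1 0) hP
      simpa only [r, edgeU, Subgroup.coe_mul, Units.val_mul, Matrix.mul_apply_eq_vecMul,
        Units.val_ofPowEqOne] using this
  have hne : L.length ≠ 0 := by
    rw [Ne, List.length_eq_zero_iff, hLdef, FreeGroup.toWord_eq_nil_iff]; exact hW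
  have h1 := (H L.length (by omega)).1
  have h2 : P L.length = 1 := by
    rw [← h, ← FreeGroup.mk_toWord (x := W), FreeGroup.lift_mk]
    simp only [P, List.take_length, hLdef]
  have h3 : r L.length = (1 : Matrix (Fin (L.length + 1)) (Fin (L.length + 1)) (ZMod 2)) 0 := by
    simp [r, h2]
  rw [h3, Matrix.one_apply_ne (by simpa [Fin.ext_iff] using hne.symm)] at h1
  exact zero_ne_one h1

end Unitriangular

/-! ### Conjugates of distinct basis elements -/

/-- Two homomorphisms from a free group that agree modulo `K` on the basis agree modulo `K`. -/
lemma lift_congr_mod {S M : Type*} [Group M] (K : Subgroup M) [K.Normal] {a a' : S → M}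
    (h : ∀ s, (a s)⁻¹ * a' s ∈ K) (z : FreeGroup S) :
    (FreeGroup.lift a z)⁻¹ * FreeGroup.lift a' z ∈ K := by
  have : (QuotientGroup.mk' K).comp (FreeGroup.lift a) =
      (QuotientGroup.mk' K).comp (FreeGroup.lift a') := by
    ext s
    simpa using QuotientGroup.eq.2 (h s)
  exact QuotientGroup.eq.1 (DFunLike.congr_fun this z)

open scoped commutatorElement in
/-- The equations `n y * X_{v y} * (n y)⁻¹ = f y` in the unknowns `X_s` are solvable in a
nilpotent group. An assignment that solves them modulo a term of the lower central series is
improved by setting `X_{v y} := (n y)⁻¹ * f y * n y`, with `n y` evaluated at the old assignment;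
the new error is a commutator with an element of that term. -/
lemma solve_nilpotent {Y S M : Type*} [Group M] [Group.IsNilpotent M] {v : Y → S}
    (hv : Function.Injective v) (n : Y → FreeGroup S) (f : Y → M) :
    ∃ a : S → M, ∀ y, FreeGroup.lift a (n y * .of (v y) * (n y)⁻¹) = f y := by
  suffices H : ∀ k : ℕ, ∃ a : S → M, ∀ y,
      (f y)⁻¹ * FreeGroup.lift a (n y * .of (v y) * (n y)⁻¹) ∈
        (⊤ : Subgroup M).lowerCentralSeries k by
    obtain ⟨c, hc⟩ := Subgroup.nilpotent_iff_lowerCentralSeries.1 ‹Group.IsNilpotent M›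
    obtain ⟨a, ha⟩ := H c
    refine ⟨a, fun y => ?_⟩
    have := ha y
    rw [hc, Subgroup.mem_bot, inv_mul_eq_one] at this
    exact this.symm
  intro k
  induction k with
  | zero => exact ⟨1, fun y => Subgroup.mem_top _⟩
  | succ k ih =>
    obtain ⟨a, ha⟩ := ih
    set K := (⊤ : Subgroup M).lowerCentralSeries k with hK
    let N : Y → M := fun y => FreeGroup.lift a (n y)
    let a' : S → M := Function.extend v (fun y => (N y)⁻¹ * f y * N y) a
    have ha' : ∀ y, a' (v y) = (N y)⁻¹ * f y * N y := fun y => hv.extend_apply _ _ _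
    have hcong : ∀ s, (a s)⁻¹ * a' s ∈ K := by
      intro s
      by_cases hs : ∃ y, v y = s
      · obtain ⟨y, rfl⟩ := hs
        rw [ha']
        have h1 : (f y)⁻¹ * (N y * a (v y) * (N y)⁻¹) ∈ K := by simpa [N] using ha y
        have h2 := Subgroup.Normal.conj_mem inferInstance _ (K.inv_mem h1) (N y)⁻¹
        convert h2 using 1
        group
      · have : a' s = a s := Function.extend_apply' _ _ _ hs
        rw [this, inv_mul_cancel]
        exact K.one_mem
    refine ⟨a', fun y => ?_⟩
    have hz := lift_congr_mod K hcong (n y)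
    set z := (FreeGroup.lift a (n y))⁻¹ * FreeGroup.lift a' (n y) with hzdef
    have hn : FreeGroup.lift a' (n y) = N y * z := by rw [hzdef]; simp [N]
    have hζ : N y * z * (N y)⁻¹ ∈ K := Subgroup.Normal.conj_mem inferInstance _ hz _
    have : (f y)⁻¹ * FreeGroup.lift a' (n y * .of (v y) * (n y)⁻¹) =
        ⁅(f y)⁻¹, N y * z * (N y)⁻¹⁆ := by
      simp only [map_mul, map_inv, FreeGroup.lift_apply_of, hn, ha', commutatorElement_def]
      group
    rw [this, Subgroup.lowerCentralSeries_succ, Subgroup.commutator_comm]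
    exact Subgroup.commutator_mem_commutator (Subgroup.mem_top _) hζ

/-- Conjugates of distinct basis elements, one for each, freely generate a free group. A nontrivial
relation among them would survive in a nilpotent group, where the conjugates can be given
arbitrary values. -/
lemma conj_injective {Y S : Type*} {v : Y → S} (hv : Function.Injective v)
    (n : Y → FreeGroup S) :
    Function.Injective (FreeGroup.lift fun y => n y * .of (v y) * (n y)⁻¹) := by
  classical
  rw [injective_iff_map_eq_one]
  intro W hW
  by_contra hne
  obtain ⟨m, f, hf⟩ := exists_nilpotent hne
  obtain ⟨a, ha⟩ := solve_nilpotent hv n f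
  refine hf ?_
  have : FreeGroup.lift f = (FreeGroup.lift a).comp
      (FreeGroup.lift fun y => n y * .of (v y) * (n y)⁻¹) := by
    ext y
    rw [MonoidHom.comp_apply, FreeGroup.lift_apply_of, FreeGroup.lift_apply_of, ha]
  rw [this, MonoidHom.comp_apply, hW, map_one]

/-! ### The quotient of `P4` by its centre -/

/-- The acting free group; its basis consists of the images of `A₁₂` and `A₂₃`. -/
abbrev F2 := FreeGroup (Fin 2)
/-- The free group of rank three. As the kernel of `Q → F2` its basis is `d, a, b`. -/
abbrev F3 := FreeGroup (Fin 3)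

/-- The action of `A₁₂`: it fixes `d` and `a`, and sends `b` to `a * b * a⁻¹`. -/
def thA : MulAut F3 :=
  MonoidHom.toMulEquiv
    (FreeGroup.lift ![.of 0, .of 1, .of 1 * .of 2 * (.of 1)⁻¹])
    (FreeGroup.lift ![.of 0, .of 1, (.of 1)⁻¹ * .of 2 * .of 1])
    (by ext i; fin_cases i <;> simp [mul_assoc])
    (by ext i; fin_cases i <;> simp [mul_assoc])

/-- The action of `A₂₃`: it fixes `d` and `b`, and sends `a` to `d⁻¹ * b * a * d * b⁻¹`. -/
def thB : MulAut F3 :=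
  MonoidHom.toMulEquiv
    (FreeGroup.lift ![.of 0, (.of 0)⁻¹ * .of 2 * .of 1 * .of 0 * (.of 2)⁻¹, .of 2])
    (FreeGroup.lift ![.of 0, (.of 2)⁻¹ * .of 0 * .of 1 * .of 2 * (.of 0)⁻¹, .of 2])
    (by ext i; fin_cases i <;> simp [mul_assoc])
    (by ext i; fin_cases i <;> simp [mul_assoc])

/-- The action of `F2` on `F3`. -/
def th : F2 →* MulAut F3 := FreeGroup.lift ![thA, thB]

/-- A model of the quotient of `P4` by its centre. -/
abbrev Q := F3 ⋊[th] F2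

@[simp] lemma th_of_zero : th (.of 0) = thA := by simp [th]
@[simp] lemma th_of_one : th (.of 1) = thB := by simp [th]
@[simp] lemma thA_0 : thA (.of 0) = .of 0 := by simp [thA]
@[simp] lemma thA_1 : thA (.of 1) = .of 1 := by simp [thA]
@[simp] lemma thA_2 : thA (.of 2) = .of 1 * .of 2 * (.of 1)⁻¹ := by simp [thA]
@[simp] lemma thB_0 : thB (.of 0) = .of 0 := by simp [thB]
@[simp] lemma thB_1 : thB (.of 1) = (.of 0)⁻¹ * .of 2 * .of 1 * .of 0 * (.of 2)⁻¹ := by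
  simp [thB]
@[simp] lemma thB_2 : thB (.of 2) = .of 2 := by simp [thB]
@[simp] lemma thAi_0 : thA⁻¹ (.of 0) = .of 0 := by simp [MulAut.inv_def, MulEquiv.symm_apply_eq]
@[simp] lemma thAi_1 : thA⁻¹ (.of 1) = .of 1 := by simp [MulAut.inv_def, MulEquiv.symm_apply_eq]
@[simp] lemma thAi_2 : thA⁻¹ (.of 2) = (.of 1)⁻¹ * .of 2 * .of 1 := by
  simp [MulAut.inv_def, MulEquiv.symm_apply_eq, mul_assoc]
@[simp] lemma thBi_0 : thB⁻¹ (.of 0) = .of 0 := by simp [MulAut.inv_def, MulEquiv.symm_apply_eq]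
@[simp] lemma thBi_1 : thB⁻¹ (.of 1) = (.of 2)⁻¹ * .of 0 * .of 1 * .of 2 * (.of 0)⁻¹ := by
  simp [MulAut.inv_def, MulEquiv.symm_apply_eq, mul_assoc]
@[simp] lemma thBi_2 : thB⁻¹ (.of 2) = .of 2 := by
  simp [MulAut.inv_def, MulEquiv.symm_apply_eq]

/-- The images in `Q` of the generators `A_{i,j}` of `P4`. The basis of the normal factor is
`d = A₁₄A₂₄A₃₄`, `a = (A₁₄A₂₄)⁻¹`, `b = A₁₄`; the value on `A₁₃` makes the central element
`A₁₂A₁₃A₂₃d` trivial. -/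
def img : ℕ → ℕ → Q
  | 1, 2 => ⟨1, .of 0⟩
  | 2, 3 => ⟨1, .of 1⟩
  | 1, 3 => ⟨(.of 0)⁻¹, (.of 0)⁻¹ * (.of 1)⁻¹⟩
  | 1, 4 => ⟨.of 2, 1⟩
  | 2, 4 => ⟨(.of 2)⁻¹ * (.of 1)⁻¹, 1⟩
  | 3, 4 => ⟨.of 1 * .of 0, 1⟩
  | _, _ => 1

/-- The evaluation of words in the generators of `P4` in `Q`. -/
def ev : FreeGroup PGen →* Q := FreeGroup.lift fun x => img x.1.1 x.1.2

lemma ev12 : ev (fA 1 2) = ⟨1, .of 0⟩ := by simp [ev, fA, img]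
lemma ev23 : ev (fA 2 3) = ⟨1, .of 1⟩ := by simp [ev, fA, img]
lemma ev13 : ev (fA 1 3) = ⟨(.of 0)⁻¹, (.of 0)⁻¹ * (.of 1)⁻¹⟩ := by simp [ev, fA, img]
lemma ev14 : ev (fA 1 4) = ⟨.of 2, 1⟩ := by simp [ev, fA, img]
lemma ev24 : ev (fA 2 4) = ⟨(.of 2)⁻¹ * (.of 1)⁻¹, 1⟩ := by simp [ev, fA, img]
lemma ev34 : ev (fA 3 4) = ⟨.of 1 * .of 0, 1⟩ := by simp [ev, fA, img]

lemma ev_rels : ∀ r ∈ P4Rels, ev r = 1 := by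
  rintro r ⟨e, he, h⟩
  rcases h with ⟨i, k, j, h1, h2, h3, h4, rfl⟩ | ⟨k, m, j, h1, h2, h3, h4, rfl⟩ |
    ⟨i, k, m, j, h1, h2, h3, h4, h5, rfl⟩ | ⟨i, m, k, j, h1, h2, h3, h4, h5, h6, h7, rfl⟩
  on_goal 1 =>
    obtain ⟨rfl, rfl, rfl⟩ | ⟨rfl, rfl, rfl⟩ | ⟨rfl, rfl, rfl⟩ | ⟨rfl, rfl, rfl⟩ :
      (i = 1 ∧ k = 2 ∧ j = 3) ∨ (i = 1 ∧ k = 2 ∧ j = 4) ∨ (i = 1 ∧ k = 3 ∧ j = 4) ∨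
        (i = 2 ∧ k = 3 ∧ j = 4) := by omega
  on_goal 5 =>
    obtain ⟨rfl, rfl, rfl⟩ | ⟨rfl, rfl, rfl⟩ | ⟨rfl, rfl, rfl⟩ | ⟨rfl, rfl, rfl⟩ :
      (k = 1 ∧ m = 2 ∧ j = 3) ∨ (k = 1 ∧ m = 2 ∧ j = 4) ∨ (k = 1 ∧ m = 3 ∧ j = 4) ∨
        (k = 2 ∧ m = 3 ∧ j = 4) := by omega
  on_goal 9 =>
    obtain ⟨rfl, rfl, rfl, rfl⟩ : i = 1 ∧ k = 2 ∧ m = 3 ∧ j = 4 := by omega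
  on_goal 10 =>
    obtain ⟨rfl, rfl, rfl, rfl⟩ | ⟨rfl, rfl, rfl, rfl⟩ :
      (i = 2 ∧ m = 3 ∧ k = 1 ∧ j = 4) ∨ (i = 1 ∧ m = 2 ∧ k = 3 ∧ j = 4) := by omega
  all_goals
    rcases he with rfl | rfl <;>
    simp only [cm, map_mul, map_inv, zpow_one, zpow_neg, neg_neg, ev12, ev23, ev13, ev14, ev24, ev34,
      SemidirectProduct.ext_iff, SemidirectProduct.mul_left, SemidirectProduct.mul_right,
      SemidirectProduct.inv_left, SemidirectProduct.inv_right, SemidirectProduct.one_left,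
      SemidirectProduct.one_right, MulAut.mul_apply, MulAut.one_apply, map_one, inv_one,
      inv_inv, mul_inv_rev, one_mul, mul_one, mul_assoc, th_of_zero, th_of_one, thA_0, thA_1,
      thA_2, thB_0, thB_1, thB_2, thAi_0, thAi_1, thAi_2, thBi_0, thBi_1, thBi_2,
      inv_mul_cancel_left, mul_inv_cancel_left, inv_mul_cancel, mul_inv_cancel, and_self]

/-- The homomorphism from `P4` to its central quotient. -/
def toQ : P4 →* Q := PresentedGroup.toGroup (f := fun x : PGen => img x.1.1 x.1.2) ev_rels

lemma pA_eq (i j : ℕ) : pA i j = PresentedGroup.mk P4Rels (fA i j) := by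
  unfold pA fA; split_ifs <;> simp [PresentedGroup.of]

lemma toQ_pA (i j : ℕ) : toQ (pA i j) = ev (fA i j) := by
  rw [pA_eq]; rfl

lemma toQ_c : toQ c31 = ⟨(.of 0)⁻¹, 1⟩ ∧ toQ c22 = ⟨.of 1 * .of 0, .of 0⟩ ∧
    toQ c13 = ⟨(.of 2)⁻¹ * .of 0, .of 1⟩ := by
  refine ⟨?_, ?_, ?_⟩ <;>
  simp only [c31, c22, c13, toQ_pA, map_mul, map_inv, ev12, ev23, ev13, ev14, ev24, ev34,
    SemidirectProduct.ext_iff, SemidirectProduct.mul_left, SemidirectProduct.mul_right,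
    SemidirectProduct.inv_left, SemidirectProduct.inv_right, MulAut.mul_apply, MulAut.one_apply,
    map_one, inv_one, inv_inv, mul_inv_rev, one_mul, mul_one, mul_assoc, th_of_zero, th_of_one,
    thA_0, thB_0, thBi_0, inv_mul_cancel_left, mul_inv_cancel_left, inv_mul_cancel,
    mul_inv_cancel, and_self]

/-! ### The normal closure of a basis element of a free group of rank three -/

section Normal_closure

open SemidirectProduct (inl inr)

/-- The left-regular action of the free group `F2` on the free group with basis `F2`. -/
def sh : F2 →* MulAut (FreeGroup F2) where
  toFun g := FreeGroup.freeGroupCongr (Equiv.mulLeft g)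
  map_one' := by
    ext1 x
    change FreeGroup.map _ x = x
    convert FreeGroup.map.id x
    ext; simp
  map_mul' g h := by
    ext1 x
    change FreeGroup.map _ x = FreeGroup.map _ (FreeGroup.map _ x)
    rw [FreeGroup.map.comp]
    congr 2
    ext; simp

lemma sh_of (g h : F2) : sh g (.of h) = .of (g * h) := by simp [sh]

/-- The free group of rank three, presented as the free group on the conjugates `w x₀ w⁻¹`
(`w ∈ ⟨x₁, x₂⟩`) extended by `⟨x₁, x₂⟩`; the conjugate `w x₀ w⁻¹` is the basis element
`FreeGroup.of w`. -/
abbrev Cov := FreeGroup F2 ⋊[sh] F2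

/-- Rewriting of a word of `F3` as an element of the normal closure of `x₀` times a word in
`x₁, x₂`. -/
def cov : F3 →* Cov := FreeGroup.lift ![inl (.of 1), inr (.of 0), inr (.of 1)]

/-- The inclusion of `⟨x₁, x₂⟩` in `F3`. -/
def incl : F2 →* F3 := FreeGroup.lift ![.of 1, .of 2]

/-- The left inverse of `cov`. -/
def uncov : Cov →* F3 :=
  SemidirectProduct.lift (FreeGroup.lift fun w => incl w * .of 0 * (incl w)⁻¹) incl (by
    intro g; ext h; simp [sh_of, mul_assoc])

lemma uncov_cov (W : F3) : uncov (cov W) = W := by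
  have : uncov.comp cov = MonoidHom.id _ := by
    ext i; fin_cases i <;> simp [uncov, cov, incl]
  exact DFunLike.congr_fun this W

lemma cov_incl (w : F2) : cov (incl w) = inr w := by
  have : cov.comp incl = inr := by
    ext1 i; fin_cases i <;> simp [incl, cov]
  exact DFunLike.congr_fun this w

/-- The retraction of `F3` onto the free group on `x₁, x₂` that sends `x₀` to `1`. -/
def kil : F3 →* F2 := FreeGroup.lift ![1, .of 0, .of 1]

lemma cov_right (z : F3) : (cov z).right = kil z := by
  have : SemidirectProduct.rightHom.comp cov = kil := by
    ext i; fin_cases i <;> simp [kil, cov]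
  exact DFunLike.congr_fun this z

/-! ### The three elements in the quotient by the centre -/

/-- The homomorphism `F3 → Q` sending the basis to the images of `c₃₁, c₂₂, c₁₃`. -/
def Phi : F3 →* Q :=
  FreeGroup.lift ![⟨(.of 0)⁻¹, 1⟩, ⟨.of 1 * .of 0, .of 0⟩, ⟨(.of 2)⁻¹ * .of 0, .of 1⟩]

lemma Phi_right (W : F3) : (Phi W).right = (cov W).right := by
  have : SemidirectProduct.rightHom.comp Phi = SemidirectProduct.rightHom.comp cov := by
    ext i; fin_cases i <;> simp [Phi, cov]
  exact DFunLike.congr_fun this W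

lemma Phi_incl_right (w : F2) : (Phi (incl w)).right = w := by
  rw [Phi_right, cov_incl, SemidirectProduct.right_inr]

lemma th_d (w : F2) : th w (.of 0) = .of 0 := by
  induction w using FreeGroup.induction_on with
  | C1 => simp
  | of i => fin_cases i <;> simp
  | inv_of i _ => fin_cases i <;> simp only [map_inv] <;> simp [-MulAut.inv_apply]
  | mul x y hx hy => rw [map_mul, MulAut.mul_apply, hy, hx]

/-- Modulo `d`, the group `F2` acts on `F3` by inner automorphisms. -/
lemma kil_th (g : F2) (z : F3) : kil (th g z) = g * kil z * g⁻¹ := by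
  induction g using FreeGroup.induction_on generalizing z with
  | C1 => simp
  | of i =>
    revert z
    suffices kil.comp (th (.of i)).toMonoidHom =
        (MulAut.conj (FreeGroup.of i)).toMonoidHom.comp kil from DFunLike.congr_fun this
    fin_cases i <;> ext j <;> fin_cases j <;> simp [kil]
  | inv_of i ih =>
    have := ih (th (FreeGroup.of i)⁻¹ z)
    rw [← MulAut.mul_apply, ← map_mul, mul_inv_cancel, map_one, MulAut.one_apply] at this
    rw [this]; group
  | mul x y hx hy => rw [map_mul, MulAut.mul_apply, hx, hy]; group

/-- The image modulo `d` of the `F3`-component of `Phi w`, for `w` a word in `x₁, x₂`. -/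
def vee (w : F2) : F2 := kil (Phi (incl w)).left

/-- The homomorphism `(u, g) ↦ kil u * g` from `Q` to `F2`. -/
def phi2 : Q →* F2 := SemidirectProduct.lift kil (MonoidHom.id _) (by
  intro g; ext1 z; simp [kil_th])

/-- The exponent sum of the first generator. -/
def expA : F2 →* Multiplicative ℤ := FreeGroup.lift ![.ofAdd 1, 1]

/-- `vee w * w` is an even power of the first generator: `phi2 ∘ Phi` sends `x₁` to the square
of that generator and `x₂` to `1`. -/
lemma vee_mul (w : F2) : vee w * w = zpowersHom F2 (.of 0) (expA w) ^ 2 := by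
  have h : phi2 (Phi (incl w)) = zpowersHom F2 (.of 0 * .of 0) (expA w) := by
    have : (phi2.comp Phi).comp incl = (zpowersHom F2 (.of 0 * .of 0)).comp expA := by
      ext1 i; fin_cases i <;> simp [phi2, Phi, incl, expA, kil, SemidirectProduct.lift]
    exact DFunLike.congr_fun this w
  have h2 : phi2 (Phi (incl w)) = vee w * w := by
    simp [phi2, SemidirectProduct.lift, Phi_incl_right, vee]
  rw [← h2, h]
  simp only [zpowersHom_apply]
  rw [← zpow_natCast, ← zpow_mul, mul_comm, zpow_mul, ← pow_two]; simp

lemma vee_injective : Function.Injective vee := by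
  intro w w' h
  have key : ∀ w, expA (vee w) = expA w := fun w => by
    have := congrArg expA (vee_mul w)
    simp only [map_mul, map_pow, zpowersHom_apply, map_zpow] at this
    have e : expA (.of 0) ^ (expA w).toAdd = expA w := by
      apply Multiplicative.toAdd.injective
      simp [expA]
    rw [e, pow_two] at this
    exact mul_right_cancel this
  have h1 := vee_mul w
  rw [← key w, h, key w', ← vee_mul w'] at h1
  exact mul_left_cancel h1

/-- A kernel element lies in the normal closure of `x₀`, which is free on the `w x₀ w⁻¹`. With
`u w` the `F3`-component of `Phi w`, these map to `u w * d⁻¹ * (u w)⁻¹`. As `d` is the first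
basis element of `F3`, applying `cov` turns the latter into conjugates of the basis elements
`(vee w)⁻¹`, to which `conj_injective` applies. -/
lemma Phi_injective : Function.Injective Phi := by
  rw [injective_iff_map_eq_one]
  intro W hW
  let n : F2 → FreeGroup F2 := fun w => (cov (Phi (incl w)).left).left
  let u : F2 → F3 := fun w => (Phi (incl w)).left
  have hr : (cov W).right = 1 := by rw [← Phi_right, hW]; rfl
  have hl : cov W = inl (cov W).left := by ext <;> simp [hr]
  have h1 : Phi.comp (uncov.comp inl) =
      inl.comp (FreeGroup.lift fun w => u w * (.of 0)⁻¹ * (u w)⁻¹) := by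
    ext1 w
    have h0 : Phi (.of 0) = inl (.of 0)⁻¹ := by ext <;> simp [Phi]
    have h3 : Phi (incl w) = inl (u w) * inr w := by
      rw [← SemidirectProduct.inl_left_mul_inr_right (Phi (incl w)), Phi_incl_right]
    have h4 : (inr w * inl (.of 0)⁻¹ * (inr w)⁻¹ : Q) = inl (.of 0)⁻¹ := by
      rw [← map_inv, ← SemidirectProduct.inl_aut, map_inv, th_d]
    calc Phi (uncov (inl (.of w))) = Phi (incl w) * Phi (.of 0) * (Phi (incl w))⁻¹ := by
          simp [uncov]
      _ = inl (u w) * (inr w * inl (.of 0)⁻¹ * (inr w)⁻¹) * (inl (u w))⁻¹ := by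
          rw [h0, h3]; group
      _ = inl (FreeGroup.lift (fun w => u w * (.of 0)⁻¹ * (u w)⁻¹) (.of w)) := by
          rw [h4]; simp
  have h2 : cov.comp (FreeGroup.lift fun w => u w * (.of 0)⁻¹ * (u w)⁻¹) =
      inl.comp ((FreeGroup.lift fun w => n w * .of (vee w) * (n w)⁻¹).comp
        (FreeGroup.lift fun w => (FreeGroup.of w)⁻¹)) := by
    ext1 w
    have h0 : cov (.of 0) = inl (.of 1) := by simp [cov]
    have h3 : cov (u w) = inl (n w) * inr (vee w) := by
      rw [← SemidirectProduct.inl_left_mul_inr_right (cov (u w)), cov_right]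
      rfl
    have h4 : (inr (vee w) * inl (.of 1) * (inr (vee w))⁻¹ : Cov) = inl (.of (vee w)) := by
      rw [← map_inv, ← SemidirectProduct.inl_aut, sh_of, mul_one]
    calc cov (FreeGroup.lift (fun w => u w * (.of 0)⁻¹ * (u w)⁻¹) (.of w))
          = cov (u w) * (cov (.of 0))⁻¹ * (cov (u w))⁻¹ := by simp
      _ = inl (n w) * (inr (vee w) * inl (.of 1) * (inr (vee w))⁻¹)⁻¹ * (inl (n w))⁻¹ := by
          rw [h0, h3]; group
      _ = _ := by
          rw [h4]; simp [mul_assoc]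
  have h3 : FreeGroup.lift (fun w => u w * (.of 0)⁻¹ * (u w)⁻¹) (cov W).left = 1 := by
    have := DFunLike.congr_fun h1 (cov W).left
    simp only [MonoidHom.comp_apply, ← hl, uncov_cov, hW] at this
    exact SemidirectProduct.inl_injective (this.symm.trans (map_one _).symm)
  have h4 : FreeGroup.lift (fun w => (FreeGroup.of w)⁻¹) (cov W).left = 1 := by
    have := DFunLike.congr_fun h2 (cov W).left
    simp only [MonoidHom.comp_apply, h3, map_one] at this
    have := SemidirectProduct.inl_injective (this.symm.trans (map_one _).symm)
    exact conj_injective vee_injective n (this.trans (map_one _).symm)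
  -- inverting every basis element is an involution
  have h5 : (FreeGroup.lift fun w : F2 => (FreeGroup.of w)⁻¹).comp
      (FreeGroup.lift fun w => (FreeGroup.of w)⁻¹) = MonoidHom.id _ := by
    ext w; simp
  have h6 := DFunLike.congr_fun h5 (cov W).left
  rw [MonoidHom.comp_apply, h4, map_one, MonoidHom.id_apply] at h6
  rw [← uncov_cov W, hl, ← h6, map_one, map_one]

end Normal_closure

/-- Corollary 4.8: the subgroup `T_3^c = ⟨c_{31}, c_{22}, c_{13}⟩` of `P_4` is free of rank 3,
freely generated by `c_{31}, c_{22}, c_{13}`. -/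
theorem statement11 :
    Function.Injective (FreeGroup.lift (![c31, c22, c13] : Fin 3 → P4)) ∧
    (FreeGroup.lift (![c31, c22, c13] : Fin 3 → P4)).range =
      Subgroup.closure {c31, c22, c13} := by
  constructor
  · have : toQ.comp (FreeGroup.lift (![c31, c22, c13] : Fin 3 → P4)) = Phi := by
      ext1 i; fin_cases i <;> simp [Phi, toQ_c.1, toQ_c.2.1, toQ_c.2.2]
    have h := Phi_injective
    rw [← this, MonoidHom.coe_comp] at h
    exact h.of_comp
  · rw [FreeGroup.range_lift_eq_closure, Matrix.range_cons, Matrix.range_cons_cons_empty]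
    rfl

end Paper
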